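/- arXiv:1804.03254 — 6 statements merged into one kernel-verified Lean document; each statement's English description precedes it below -/
import Mathlib

section
/- Let θ be an infinite cardinal and let μ ≤ λ be infinite cardinals with λ^{<θ} = λ. Then there exists a family 𝒢 of pairwise distinct functions from λ to μ with |𝒢| = 2^λ which is independent in the following sense: for every subfamily 𝒢₀ ⊆ 𝒢 with |𝒢₀| < θ and every assignment v : 𝒢₀ → μ such that v(g) lies in the range of g for each g ∈ 𝒢₀, there exists t < λ with g(t) = v(g) for all g ∈ 𝒢₀. -/
open Cardinal

/-!
It suffices to treat `M = L`, since the values can be pushed forward along a surjection `L → M`.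
The functions are indexed by the subsets `A` of `L`. Fewer than `th` distinct subsets `A i` are told
apart by the conditions that `A` agree with `A i` on the points `x i j`, where `x i j` separates
`A i` from `A j`. Listing these conditions, each together with a prescribed value, gives a lookup
table at which the function indexed by `A i` takes the `i`-th value. As `l ^ κ ≤ l` for all
`κ < th`, there are at most `l` such tables, so they can serve as the points of `L`.
-/

section

open Function Set

universe u

/-- The family `F` is independent on `s` if every assignment of values to the indices in `s` is
attained at a common point. The values are arbitrary, so each `F i` with `i ∈ s` is surjective. -/
def IndependentOn {ι α β : Type*} (F : ι → α → β) (s : Set ι) : Prop :=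
  ∀ v : ι → β, ∃ t, ∀ i ∈ s, F i t = v i

namespace IndependentOn

variable {ι α β γ : Type*} {F : ι → α → β} {s : Set ι}

theorem comp_surjective (hF : IndependentOn F s) {f : β → γ} (hf : Surjective f) :
    IndependentOn (fun i => f ∘ F i) s := by
  intro v
  obtain ⟨t, ht⟩ := hF (surjInv hf ∘ v)
  exact ⟨t, fun i hi => by simp [ht i hi, surjInv_eq hf]⟩

theorem extend (hF : IndependentOn F s) {e : α → γ} (he : Injective e) (d : ι → γ → β) :
    IndependentOn (fun i => Function.extend e (F i) (d i)) s := by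
  intro v
  obtain ⟨t, ht⟩ := hF v
  exact ⟨e t, fun i hi => (he.extend_apply _ _ t).trans (ht i hi)⟩

theorem id_of_preimage {G : Set (α → β)} (hG : G ⊆ range F)
    (hF : IndependentOn F (F ⁻¹' G)) : IndependentOn id G := by
  intro v
  obtain ⟨t, ht⟩ := hF (v ∘ F)
  refine ⟨t, fun g hg => ?_⟩
  obtain ⟨i, rfl⟩ := hG hg
  exact ht i hg

theorem injective_of_pairs [Nontrivial β] (hF : ∀ i j, IndependentOn F {i, j}) :
    Injective F := by
  classical
  intro i j hij
  by_contra hne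
  obtain ⟨x, y, hxy⟩ := exists_pair_ne β
  obtain ⟨t, ht⟩ := hF i j (update (fun _ => y) i x)
  have hi : F i t = x := by simpa using ht i (by simp)
  have hj : F j t = y := by simpa [Ne.symm hne] using ht j (by simp)
  exact hxy (by rw [← hi, ← hj, hij])

end IndependentOn

/-- `A` satisfies the list `p` of membership conditions: `p i = (x, P)` prescribes that `x ∈ A` if
`P` is true and that `x ∉ A` if `P` is false. -/
def Satisfies {ι α : Type*} (A : Set α) (p : ι → α × Prop) : Prop :=
  ∀ i, (p i).1 ∈ A ↔ (p i).2

theorem exists_satisfies_iff_eq {ι α : Type*} [Nonempty α] {A : ι → Set α} (hA : Injective A) :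
    ∃ p : ι → ι → α × Prop, ∀ i j, Satisfies (A j) (p i) ↔ i = j := by
  have separated (i j : ι) : ∃ x, i ≠ j → ¬(x ∈ A j ↔ x ∈ A i) := by
    by_contra! h
    let x₀ := Classical.arbitrary α
    exact (h x₀).1 (hA (ext fun x => (h x).2.symm))
  choose x hx using separated
  refine ⟨fun i j => (x i j, x i j ∈ A i), fun i j => ⟨fun h => ?_, ?_⟩⟩
  · by_contra hij
    exact hx i j hij (h j)
  · rintro rfl _
    rfl

/-- A lookup table for subsets of `α` with values in `β`. The row `i` consists of membership
conditions, again indexed by `ι`, and of the value of the sets satisfying them. -/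
abbrev LookupTable (ι α β : Type*) : Type _ :=
  ι → (ι → α × Prop) × β

namespace LookupTable

open Classical in
/-- The value which the table `T` gives to `A`, with an arbitrary choice if `A` satisfies the
conditions of several rows or of none. -/
noncomputable def eval {ι α β : Type*} [Nonempty β] (T : LookupTable ι α β) (A : Set α) : β :=
  if h : ∃ i, Satisfies A (T i).1 then (T h.choose).2 else Classical.arbitrary β

theorem eval_eq {ι α β : Type*} [Nonempty β] {T : LookupTable ι α β} {A : Set α} {i : ι}
    (h : ∀ j, Satisfies A (T j).1 ↔ j = i) : T.eval A = (T i).2 := by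
  have hex : ∃ j, Satisfies A (T j).1 := ⟨i, (h i).2 rfl⟩
  rw [eval, dif_pos hex, (h _).1 hex.choose_spec]

theorem exists_eval_eq {ι α β : Type*} [Nonempty α] [Nonempty β] {A : ι → Set α}
    (hA : Injective A) (v : ι → β) : ∃ T : LookupTable ι α β, ∀ i, T.eval (A i) = v i := by
  obtain ⟨p, hp⟩ := exists_satisfies_iff_eq hA
  exact ⟨fun i => (p i, v i), fun i => eval_eq fun j => hp j i⟩

theorem mk_le {ι α : Type u} [Infinite α] (h : #α ^ #ι ≤ #α) : #(LookupTable ι α α) ≤ #α := by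
  have hα : ℵ₀ ≤ #α := aleph0_le_mk α
  have hcond : #(α × Prop) = #α := by
    simpa using mul_eq_left hα (ofNat_lt_aleph0.le.trans hα) two_ne_zero
  calc #(LookupTable ι α α) = (#α ^ #ι * #α) ^ #ι := by simp [hcond]
    _ ≤ #α ^ #ι := power_le_power_right (mul_le_of_le hα h le_rfl)
    _ ≤ #α := h

end LookupTable

theorem exists_mk_Iio_eq {α : Type u} [LinearOrder α] [WellFoundedLT α] {κ : Cardinal.{u}}
    (hκ : κ < #α) : ∃ a : α, #(Iio a) = κ := by
  have hlt : κ.ord < Ordinal.type (α := α) (· < ·) := (ord_lt_ord.2 hκ).trans_le (ord_le_type _)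
  obtain ⟨a, ha⟩ := Ordinal.typein_surj (α := α) (· < ·) hlt
  refine ⟨a, ?_⟩
  calc #(Iio a) = (Ordinal.typein (α := α) (· < ·) a).card :=
        congrArg Ordinal.card (Ordinal.type_Iio_lt a)
    _ = κ := by rw [ha, card_ord]

/-- The lookup tables on `α` with rows indexed by an initial segment whose cardinality `κ` satisfies
`#α ^ κ ≤ #α`. Initial segments of a well-order represent every `κ < #α`. -/
abbrev SmallLookupTable (α : Type u) [LinearOrder α] : Type u :=
  Σ a : {a : α // #α ^ #(Iio a) ≤ #α}, LookupTable (Iio a.1) α α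

namespace SmallLookupTable

variable {α : Type u} [Infinite α] [LinearOrder α]

theorem mk_le : #(SmallLookupTable α) ≤ #α := by
  rw [mk_sigma]
  calc sum (fun a : {a : α // #α ^ #(Iio a) ≤ #α} => #(LookupTable (Iio a.1) α α))
      ≤ sum fun _ : {a : α // #α ^ #(Iio a) ≤ #α} => #α :=
        sum_le_sum _ _ fun a => LookupTable.mk_le a.2
    _ = #{a : α // #α ^ #(Iio a) ≤ #α} * #α := sum_const' _ _
    _ ≤ #α := mul_le_of_le (aleph0_le_mk α) (mk_subtype_le _) le_rfl

theorem independentOn_eval [WellFoundedLT α] {s : Set (Set α)} (hs : #α ^ #s ≤ #α) :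
    IndependentOn (fun A (T : SmallLookupTable α) => T.2.eval A) s := by
  intro v
  have hlt : #s < #α := (cantor' _ (one_lt_aleph0.trans_le (aleph0_le_mk α))).trans_le hs
  obtain ⟨a, ha⟩ := exists_mk_Iio_eq hlt
  obtain ⟨e⟩ := Cardinal.eq.1 ha
  obtain ⟨T, hT⟩ := LookupTable.exists_eval_eq (Subtype.val_injective.comp e.injective)
    fun i => v (e i)
  exact ⟨⟨⟨a, by rwa [ha]⟩, T⟩, fun A hA => by simpa using hT (e.symm ⟨A, hA⟩)⟩

end SmallLookupTable

theorem exists_independentOn_of_power_le (α : Type u) [Infinite α] :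
    ∃ F : Set α → α → α, ∀ s : Set (Set α), #α ^ #s ≤ #α → IndependentOn F s := by
  obtain ⟨_, _⟩ := exists_wellFoundedLT α
  obtain ⟨e⟩ := SmallLookupTable.mk_le (α := α)
  exact ⟨_, fun s hs => (SmallLookupTable.independentOn_eval hs).extend e.injective fun _ => id⟩

theorem engelking_karlowicz_general {L M : Type u} [Infinite L] [Nontrivial M] (hML : #M ≤ #L) :
    ∃ G : Set (L → M), #G = 2 ^ #L ∧
      ∀ G₀ ⊆ G, #L ^ #G₀ ≤ #L → IndependentOn id G₀ := by
  obtain ⟨e⟩ := hML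
  obtain ⟨F, hF⟩ := exists_independentOn_of_power_le L
  let F' : Set L → L → M := fun A => invFun e ∘ F A
  have hF' (s : Set (Set L)) (hs : #L ^ #s ≤ #L) : IndependentOn F' s :=
    (hF s hs).comp_surjective (invFun_surjective e.injective)
  have power_le_of_pair (A B : Set L) : #L ^ #({A, B} : Set (Set L)) ≤ #L :=
    pow_le (aleph0_le_mk L) (lt_aleph0_of_finite _)
  have hinj : Injective F' :=
    IndependentOn.injective_of_pairs fun A B => hF' _ (power_le_of_pair A B)
  refine ⟨range F', by rw [mk_range_eq F' hinj, mk_set], fun G₀ hG₀ hcard => ?_⟩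
  have hpre : #L ^ #(F' ⁻¹' G₀) ≤ #L :=
    (power_le_power_left (mk_ne_zero L) (mk_preimage_of_injective F' G₀ hinj)).trans hcard
  exact (hF' _ hpre).id_of_preimage hG₀

end

/-- **Engelking–Karłowicz** (Fact 1.2).  Let `th` be an infinite cardinal and
`mu ≤ l` infinite cardinals with `l^{<th} = l`.  Let `L` be a set of cardinality
`l` and `M` a set of cardinality `mu`.  Then there is a family `G` of (pairwise
distinct) functions `L → M` of cardinality `2^l` which is independent: for
every subfamily `G₀ ⊆ G` of cardinality `< th` and every assignment
`v : (L → M) → M` with `v g ∈ range g` for all `g ∈ G₀`, there is `t ∈ L`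
with `g t = v g` for all `g ∈ G₀`. -/
theorem engelking_karlowicz
    (l mu th : Cardinal.{u}) (hth : ℵ₀ ≤ th) (hmu : ℵ₀ ≤ mu) (hl : ℵ₀ ≤ l)
    (hmul : mu ≤ l) (hpow : l ^< th = l)
    (L M : Type u) (hL : #L = l) (hM : #M = mu) :
    ∃ G : Set (L → M), #G = 2 ^ l ∧
      ∀ G₀ ⊆ G, #G₀ < th →
        ∀ v : (L → M) → M, (∀ g ∈ G₀, v g ∈ Set.range g) →
          ∃ t : L, ∀ g ∈ G₀, g t = v g := by
  subst hL hM
  have : Infinite L := infinite_iff.2 hl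
  have : Infinite M := infinite_iff.2 hmu
  obtain ⟨G, hG, hind⟩ := engelking_karlowicz_general hmul
  exact ⟨G, hG, fun G₀ hG₀ hlt v _ => hind G₀ hG₀ ((le_powerlt _ hlt).trans hpow.le) v⟩
end

section
/- Let f ∈ ℱ, let k ≥ 1, let s ∈ 𝒮_{f,k}, and let ρ ∈ s with lg(ρ) = j < k. Then exactly f(j) of the f(j)+1 immediate successors ρ⌢⟨ℓ⟩ (ℓ ≤ f(j)) of ρ belong to s; equivalently, there is exactly one ℓ ≤ f(j) such that ρ⌢⟨ℓ⟩ ∉ s. -/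
/-- `η ∈ 𝒯_f` : a finite sequence with `η(ℓ) ≤ f(ℓ)` for all `ℓ < lg(η)`. -/
def inT (f : ℕ → ℕ) (η : List ℕ) : Prop := ∀ i : Fin η.length, η.get i ≤ f i

/-- `𝒯_{f,k}` : elements of `𝒯_f` of length exactly `k`. -/
def Tk (f : ℕ → ℕ) (k : ℕ) : Set (List ℕ) := {η | η.length = k ∧ inT f η}

/-- `𝒯_{f,[k]}` : elements of `𝒯_f` of length at most `k`. -/
def Tle (f : ℕ → ℕ) (k : ℕ) : Set (List ℕ) := {η | η.length ≤ k ∧ inT f η}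

/-- `𝒯_f = ⋃_k 𝒯_{f,k}`. -/
def Tf (f : ℕ → ℕ) : Set (List ℕ) := {η | inT f η}

/-- The conditions on `s ⊆ 𝒯_{f,[k]}` prior to maximality: nonempty, closed
under initial segment, every `⊴`-maximal node is in `𝒯_{f,k}`, and `s`
contains no full splitting `{ρ⌢⟨ℓ⟩ : ℓ ≤ f(lg ρ)}`. -/
def SBase (f : ℕ → ℕ) (k : ℕ) (s : Set (List ℕ)) : Prop :=
  s ⊆ Tle f k ∧ s.Nonempty ∧
  (∀ η ∈ s, ∀ ρ : List ℕ, ρ <+: η → ρ ∈ s) ∧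
  (∀ ρ ∈ s, (∀ η ∈ s, ρ <+: η → η = ρ) → ρ.length = k) ∧
  (∀ ρ ∈ Tle f k, ¬ ∀ ℓ ≤ f ρ.length, ρ ++ [ℓ] ∈ s)

/-- `𝒮_{f,k}` : the `k`-maximal subsets of `𝒯_{f,[k]}`, i.e. those satisfying
`SBase` and maximal under inclusion subject to it. -/
def Sk (f : ℕ → ℕ) (k : ℕ) : Set (Set (List ℕ)) :=
  {s | SBase f k s ∧ ∀ s', SBase f k s' → s ⊆ s' → s' = s}

/-- `𝒮_f = ⋃_{k ≥ 1} 𝒮_{f,k}`. -/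
def Sf (f : ℕ → ℕ) : Set (Set (List ℕ)) := {s | ∃ k, 1 ≤ k ∧ s ∈ Sk f k}

/-- The restriction `η ↾ k = ⟨η 0, …, η (k-1)⟩` of `η : ℕ → ℕ`. -/
def restr (η : ℕ → ℕ) (k : ℕ) : List ℕ := List.map η (List.range k)

/-- `lim(𝒯_f)` : branches of `𝒯_f`. -/
def limT (f : ℕ → ℕ) : Set (ℕ → ℕ) := {η | ∀ k, restr η k ∈ Tk f k}

/-- `lim(𝒮_f)` : sequences `⟨s_k : 1 ≤ k < ω⟩` with `s_k ∈ 𝒮_{f,k}`,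
increasing under inclusion (the value at `0` is irrelevant). -/
def limS (f : ℕ → ℕ) : Set (ℕ → Set (List ℕ)) :=
  {ν | (∀ k, 1 ≤ k → ν k ∈ Sk f k) ∧ ∀ k k', 1 ≤ k → k < k' → ν k ⊆ ν k'}

/-!
Suppose `ρ⌢⟨a⟩` and `ρ⌢⟨b⟩` are two distinct successors of `ρ` omitted by `s`. As `ρ` is not
`⊴`-maximal, some `ρ⌢⟨c⟩` lies in `s`; adding to `s` a copy above `ρ⌢⟨a⟩` of its part above
`ρ⌢⟨c⟩` contradicts maximality. No full splitting appears: at `ρ` because `ρ⌢⟨b⟩` is still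
omitted, in the copy because there is none above `ρ⌢⟨c⟩`.
-/

section Graft

variable {α : Type*} {s : Set (List α)} {ρ η t : List α} {a c : α}

/-- The tree `s` together with a copy, placed above `ρ⌢⟨a⟩`, of the part of `s` above `ρ⌢⟨c⟩`.
It is used to enlarge a tree that omits `ρ⌢⟨a⟩`. -/
def graft (s : Set (List α)) (ρ : List α) (a c : α) : Set (List α) :=
  s ∪ {η | ∃ t, η = ρ ++ a :: t ∧ ρ ++ c :: t ∈ s}

theorem subset_graft : s ⊆ graft s ρ a c :=
  Set.subset_union_left

theorem append_cons_mem_graft (ht : ρ ++ c :: t ∈ s) : ρ ++ a :: t ∈ graft s ρ a c :=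
  Or.inr ⟨t, rfl, ht⟩

theorem mem_of_mem_graft_of_not_prefix (hη : η ∈ graft s ρ a c) (hρη : ¬ ρ ++ [a] <+: η) :
    η ∈ s := by
  rcases hη with hη | ⟨t, rfl, -⟩
  · exact hη
  · exact absurd ⟨t, by simp⟩ hρη

theorem append_cons_mem_of_mem_graft (closed : ∀ η ∈ s, ∀ τ, τ <+: η → τ ∈ s)
    (ha : ρ ++ [a] ∉ s) (ht : ρ ++ a :: t ∈ graft s ρ a c) : ρ ++ c :: t ∈ s := by
  rcases ht with ht | ⟨u, hu, hcu⟩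
  · exact absurd (closed _ ht _ ⟨t, by simp⟩) ha
  · obtain rfl : t = u := by simpa using hu
    exact hcu

theorem mem_graft_of_prefix (closed : ∀ η ∈ s, ∀ τ, τ <+: η → τ ∈ s)
    (hη : η ∈ graft s ρ a c) {τ : List α} (hτ : τ <+: η) : τ ∈ graft s ρ a c := by
  rcases hη with hη | ⟨t, rfl, ht⟩
  · exact subset_graft (closed η hη τ hτ)
  · have hρ : ρ ∈ s := closed _ ht ρ (List.prefix_append ..)
    rcases List.prefix_or_prefix_of_prefix hτ (List.prefix_append ρ (a :: t)) with hτρ | ⟨u, rfl⟩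
    · exact subset_graft (closed ρ hρ τ hτρ)
    · rcases List.prefix_cons_iff.1 ((List.prefix_append_right_inj ρ).1 hτ) with
        rfl | ⟨u, rfl, hu⟩
      · simpa using subset_graft hρ
      · have hcu : ρ ++ c :: u <+: ρ ++ c :: t :=
          (List.prefix_append_right_inj ρ).2 (List.cons_prefix_cons.2 ⟨rfl, hu⟩)
        exact append_cons_mem_graft (closed _ ht _ hcu)

theorem eq_append_cons_of_prefix_of_maximal_graft
    (hmax : ∀ η ∈ graft s ρ a c, ρ ++ a :: t <+: η → η = ρ ++ a :: t)
    (hη : η ∈ s) (hcη : ρ ++ c :: t <+: η) : η = ρ ++ c :: t := by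
  obtain ⟨u, rfl⟩ := hcη
  have hu : ρ ++ a :: (t ++ u) = ρ ++ a :: t :=
    hmax _ (append_cons_mem_graft (by simpa using hη)) ⟨u, by simp⟩
  simpa using hu

end Graft

theorem inT.set {f : ℕ → ℕ} {η : List ℕ} {i a : ℕ} (hη : inT f η) (ha : a ≤ f i) :
    inT f (η.set i a) := by
  rintro ⟨m, hm⟩
  rw [List.get_eq_getElem, List.getElem_set]
  split_ifs with him
  · exact him ▸ ha
  · exact hη ⟨m, by simpa using hm⟩

namespace SBase

variable {f : ℕ → ℕ} {k : ℕ} {s : Set (List ℕ)} {ρ : List ℕ} {a b c : ℕ}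

theorem exists_succ_mem (hs : SBase f k s) (hρ : ρ ∈ s) (hρk : ρ.length < k) :
    ∃ c, ρ ++ [c] ∈ s := by
  obtain ⟨-, -, closed, maximal, -⟩ := hs
  by_contra! hsucc
  refine hρk.ne (maximal ρ hρ ?_)
  rintro _ hη ⟨_ | ⟨c, t⟩, rfl⟩
  · simp
  · exact absurd (closed _ hη _ ⟨t, by simp⟩) (hsucc c)

theorem graft_subset_Tle (hs : SBase f k s) (haf : a ≤ f ρ.length) :
    graft s ρ a c ⊆ Tle f k := by
  rintro _ (hη | ⟨t, rfl, ht⟩)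
  · exact hs.1 hη
  · obtain ⟨hlen, hinT⟩ := hs.1 ht
    exact ⟨by simpa using hlen, by simpa using hinT.set haf⟩

theorem not_forall_succ_mem_graft (hs : SBase f k s) (ha : ρ ++ [a] ∉ s)
    (hbf : b ≤ f ρ.length) (hb : ρ ++ [b] ∉ s) (hba : b ≠ a) {τ : List ℕ} (hτ : τ ∈ Tle f k) :
    ¬ ∀ ℓ ≤ f τ.length, τ ++ [ℓ] ∈ graft s ρ a c := by
  obtain ⟨subset_Tle, -, closed, -, nonsplitting⟩ := hs
  intro hall
  by_cases hρτ : ρ ++ [a] <+: τ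
  · obtain ⟨t, rfl⟩ := hρτ
    have hsplit : ∀ ℓ ≤ f (ρ ++ c :: t).length, (ρ ++ c :: t) ++ [ℓ] ∈ s := by
      intro ℓ hℓ
      have hmem : ρ ++ a :: (t ++ [ℓ]) ∈ graft s ρ a c := by
        simpa using hall ℓ (by simpa using hℓ)
      simpa using append_cons_mem_of_mem_graft closed ha hmem
    have hct : ρ ++ c :: t ∈ s := closed _ (hsplit 0 (Nat.zero_le _)) _ (List.prefix_append ..)
    exact nonsplitting _ (subset_Tle hct) hsplit
  · have hmem : ∀ ℓ ≤ f τ.length, τ ++ [ℓ] ≠ ρ ++ [a] → τ ++ [ℓ] ∈ s := fun ℓ hℓ hne ↦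
      mem_of_mem_graft_of_not_prefix (hall ℓ hℓ) fun hpre ↦
        (List.prefix_concat_iff.1 hpre).elim (fun h ↦ hne h.symm) hρτ
    by_cases hτρ : τ = ρ
    · subst hτρ
      exact hb (hmem b hbf (by simpa using hba))
    · exact nonsplitting τ hτ fun ℓ hℓ ↦ hmem ℓ hℓ fun h ↦ hτρ (List.append_inj' h rfl).1

theorem graft (hs : SBase f k s) (haf : a ≤ f ρ.length) (ha : ρ ++ [a] ∉ s)
    (hbf : b ≤ f ρ.length) (hb : ρ ++ [b] ∉ s) (hba : b ≠ a) :
    SBase f k (graft s ρ a c) := by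
  have ⟨_, nonempty, closed, maximal, _⟩ := hs
  refine ⟨hs.graft_subset_Tle haf, nonempty.mono subset_graft,
    fun η hη τ hτ ↦ mem_graft_of_prefix closed hη hτ, ?_,
    fun τ hτ ↦ hs.not_forall_succ_mem_graft ha hbf hb hba hτ⟩
  rintro _ (hη | ⟨t, rfl, ht⟩) hmax
  · exact maximal _ hη fun τ hτ ↦ hmax τ (subset_graft hτ)
  · have hlen : (ρ ++ c :: t).length = k :=
      maximal _ ht fun η hη ↦ eq_append_cons_of_prefix_of_maximal_graft hmax hη
    simpa using hlen

end SBase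

theorem unique_omitted_successor_general {f : ℕ → ℕ} {k : ℕ} {s : Set (List ℕ)}
    (hs : s ∈ Sk f k) {ρ : List ℕ} (hρ : ρ ∈ s) (hρk : ρ.length < k) :
    ∃! ℓ : ℕ, ℓ ≤ f ρ.length ∧ ρ ++ [ℓ] ∉ s := by
  obtain ⟨base, maximal⟩ := hs
  have ⟨subset_Tle, _, _, _, nonsplitting⟩ := base
  obtain ⟨a, haf, ha⟩ : ∃ a ≤ f ρ.length, ρ ++ [a] ∉ s := by
    simpa using nonsplitting ρ (subset_Tle hρ)
  refine ⟨a, ⟨haf, ha⟩, fun b ⟨hbf, hb⟩ ↦ ?_⟩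
  by_contra hba
  obtain ⟨c, hc⟩ := base.exists_succ_mem hρ hρk
  have hgraft : graft s ρ a c = s := maximal _ (base.graft haf ha hbf hb hba) subset_graft
  exact ha (hgraft ▸ append_cons_mem_graft hc)

/-- For `f ∈ ℱ`, `k ≥ 1`, `s ∈ 𝒮_{f,k}` and `ρ ∈ s` of length `j < k`,
there is exactly one `ℓ ≤ f(j)` with `ρ⌢⟨ℓ⟩ ∉ s` (so exactly `f(j)` of the
`f(j)+1` immediate successors of `ρ` belong to `s`). -/
theorem unique_omitted_successor
    (f : ℕ → ℕ) (hf : StrictMono f) (hf0 : ∀ k, 0 < f k)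
    (k : ℕ) (hk : 1 ≤ k) (s : Set (List ℕ)) (hs : s ∈ Sk f k)
    (ρ : List ℕ) (hρ : ρ ∈ s) (j : ℕ) (hj : ρ.length = j) (hjk : j < k) :
    ∃! ℓ : ℕ, ℓ ≤ f j ∧ ρ ++ [ℓ] ∉ s := by
  subst hj
  exact unique_omitted_successor_general hs hρ hjk
end

section
/- Let f ∈ ℱ and k ≥ 1. Then 𝒮_{f,k} is a finite nonempty set, and for every η ∈ 𝒯_{f,k} there exists s ∈ 𝒮_{f,k} with η ∈ s. -/
/-!
Since `𝒯_{f,[k]}` is finite, it has only finitely many subsets, so every subset satisfying the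
conditions `SBase` extends to a maximal one. The initial segments of a sequence `η ∈ 𝒯_{f,k}`
satisfy these conditions: where `f` is positive, every node has two incompatible successors, so a
single branch contains no full splitting.
-/

theorem finite_setOf_list_length_le_forall_mem {α : Type*} {s : Set α} (hs : s.Finite) (n : ℕ) :
    {l : List α | l.length ≤ n ∧ ∀ a ∈ l, a ∈ s}.Finite := by
  have := hs.to_subtype
  refine ((List.finite_length_le s n).image (List.map (↑))).subset ?_
  rintro l ⟨hlen, hmem⟩
  lift l to List s using hmem
  exact ⟨l, (List.length_map _).symm.trans_le hlen, rfl⟩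

theorem eq_of_append_singleton_prefix {α : Type*} {l m : List α} {a b : α}
    (ha : l ++ [a] <+: m) (hb : l ++ [b] <+: m) : a = b := by
  have heq : l ++ [a] = l ++ [b] :=
    (List.prefix_of_prefix_length_le ha hb (by simp)).eq_of_length (by simp)
  simpa using heq

theorem inT.of_prefix {f : ℕ → ℕ} {η ρ : List ℕ} (hη : inT f η) (hρ : ρ <+: η) : inT f ρ := by
  intro i
  simpa only [List.get_eq_getElem, hρ.getElem i.isLt] using hη ⟨i, i.isLt.trans_le hρ.length_le⟩

theorem replicate_zero_mem_Tk (f : ℕ → ℕ) (k : ℕ) : List.replicate k 0 ∈ Tk f k :=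
  ⟨List.length_replicate, fun i => by simp⟩

theorem Tle_finite (f : ℕ → ℕ) (k : ℕ) : (Tle f k).Finite := by
  have hentries : (⋃ i ∈ Set.Iio k, Set.Iic (f i)).Finite :=
    (Set.finite_Iio k).biUnion fun i _ => Set.finite_Iic (f i)
  refine (finite_setOf_list_length_le_forall_mem hentries k).subset ?_
  rintro η ⟨hlen, hη⟩
  refine ⟨hlen, fun a ha => ?_⟩
  obtain ⟨i, rfl⟩ := List.get_of_mem ha
  exact Set.mem_biUnion (i.isLt.trans_le hlen) (hη i)

theorem finite_setOf_SBase (f : ℕ → ℕ) (k : ℕ) : {s | SBase f k s}.Finite :=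
  (Tle_finite f k).finite_subsets.subset fun _ hs => hs.1

theorem SBase_setOf_prefix {f : ℕ → ℕ} {k : ℕ} (hf : ∀ i < k, 0 < f i) {η : List ℕ}
    (hη : η ∈ Tk f k) : SBase f k {ρ | ρ <+: η} := by
  obtain ⟨rfl, hT⟩ := hη
  refine ⟨fun ρ hρ => ⟨hρ.length_le, hT.of_prefix hρ⟩, ⟨η, List.prefix_rfl⟩,
    fun _ hσ _ hρ => hρ.trans hσ, fun ρ hρ hmax => ?_, fun ρ _ hfull => ?_⟩
  · rw [hmax η List.prefix_rfl hρ]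
  · have hzero : ρ ++ [0] <+: η := hfull 0 (Nat.zero_le _)
    have hlt : ρ.length < η.length := by simpa using hzero.length_le
    exact zero_ne_one (eq_of_append_singleton_prefix hzero (hfull 1 (hf _ hlt)))

theorem mem_Sk_iff_maximal {f : ℕ → ℕ} {k : ℕ} {s : Set (List ℕ)} :
    s ∈ Sk f k ↔ Maximal (SBase f k) s := by
  simp only [Sk, Set.mem_ofPred_eq, maximal_iff, eq_comm]

theorem SBase.exists_mem_Sk_superset {f : ℕ → ℕ} {k : ℕ} {s : Set (List ℕ)} (hs : SBase f k s) :
    ∃ t ∈ Sk f k, s ⊆ t := by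
  obtain ⟨t, hst, ht⟩ := (finite_setOf_SBase f k).exists_le_maximal hs
  exact ⟨t, mem_Sk_iff_maximal.2 ht, hst⟩

theorem Sk_finite (f : ℕ → ℕ) (k : ℕ) : (Sk f k).Finite :=
  (finite_setOf_SBase f k).subset fun _ hs => hs.1

theorem exists_mem_Sk_of_mem_Tk {f : ℕ → ℕ} {k : ℕ} (hf : ∀ i < k, 0 < f i) {η : List ℕ}
    (hη : η ∈ Tk f k) : ∃ s ∈ Sk f k, η ∈ s := by
  obtain ⟨s, hs, hsub⟩ := (SBase_setOf_prefix hf hη).exists_mem_Sk_superset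
  exact ⟨s, hs, hsub List.prefix_rfl⟩

theorem Sk_nonempty {f : ℕ → ℕ} {k : ℕ} (hf : ∀ i < k, 0 < f i) : (Sk f k).Nonempty := by
  obtain ⟨s, hs, -⟩ := exists_mem_Sk_of_mem_Tk hf (replicate_zero_mem_Tk f k)
  exact ⟨s, hs⟩

theorem Sk_finite_nonempty_covers_general (f : ℕ → ℕ) (k : ℕ) (hf : ∀ i < k, 0 < f i) :
    (Sk f k).Finite ∧ (Sk f k).Nonempty ∧ ∀ η ∈ Tk f k, ∃ s ∈ Sk f k, η ∈ s :=
  ⟨Sk_finite f k, Sk_nonempty hf, fun _ hη => exists_mem_Sk_of_mem_Tk hf hη⟩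

/-- For `f ∈ ℱ` and `k ≥ 1`, the set `𝒮_{f,k}` is finite and nonempty, and
every `η ∈ 𝒯_{f,k}` belongs to some `s ∈ 𝒮_{f,k}`. -/
theorem Sk_finite_nonempty_covers
    (f : ℕ → ℕ) (hf : StrictMono f) (hf0 : ∀ k, 0 < f k)
    (k : ℕ) (hk : 1 ≤ k) :
    (Sk f k).Finite ∧ (Sk f k).Nonempty ∧
      ∀ η ∈ Tk f k, ∃ s ∈ Sk f k, η ∈ s :=
  Sk_finite_nonempty_covers_general f k fun i _ => hf0 i
end

section
/- Let f ∈ ℱ, k ≥ 1, and η ∈ 𝒯_{f,k}. Then the intersection of all s ∈ 𝒮_{f,k} with η ∈ s meets 𝒯_{f,k} exactly in {η}; equivalently, for every η' ∈ 𝒯_{f,k} with η' ≠ η there exists s ∈ 𝒮_{f,k} with η ∈ s and η' ∉ s. -/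
/-!
Choose at every node `ρ` of length `< k` one forbidden successor `ρ⌢⟨m ρ⟩` and cut off all cones
above the forbidden nodes. The resulting tree is `k`-maximal: adding anything to it adds some
forbidden `ρ⌢⟨m ρ⟩` with `ρ` in the tree, whose other successors are all present, so a full
splitting appears. To separate `η` from some `η'` that is not an initial segment of it, forbid `η'`
itself and, at all other nodes, any successor that does not lead to `η`; one exists since `f ≥ 1`.
-/

variable {f : ℕ → ℕ} {k : ℕ} {m : List ℕ → ℕ} {s : Set (List ℕ)} {η η' ρ σ : List ℕ} {c : ℕ}

theorem inT_concat : inT f (ρ ++ [c]) ↔ inT f ρ ∧ c ≤ f ρ.length := by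
  simp only [inT, List.get_eq_getElem, Fin.forall_iff, List.length_append, List.length_singleton,
    Nat.forall_lt_succ_right']
  grind

theorem inT.of_prefix_s4 (hσ : inT f σ) (h : ρ <+: σ) : inT f ρ := fun i ↦ by
  simpa only [List.get_eq_getElem, h.getElem i.isLt] using hσ ⟨i, i.isLt.trans_le h.length_le⟩

theorem concat_mem_Tle : ρ ++ [c] ∈ Tle f k ↔ ρ.length < k ∧ inT f ρ ∧ c ≤ f ρ.length := by
  simp [Tle, inT_concat]

theorem mem_Tle_of_prefix (hσ : σ ∈ Tle f k) (h : ρ <+: σ) : ρ ∈ Tle f k :=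
  ⟨h.length_le.trans hσ.1, hσ.2.of_prefix_s4 h⟩

theorem SBase.mem_of_prefix (hs : SBase f k s) (hσ : σ ∈ s) (h : ρ <+: σ) : ρ ∈ s :=
  hs.2.2.1 σ hσ ρ h

/-- The subtree of `𝒯_{f,[k]}` left after cutting off, for every `ρ`, the cone above the immediate
successor `ρ⌢⟨m ρ⟩`. These trees are the explicit members of `𝒮_{f,k}` used for separation. The
choice function `m` is total, but only its values at `ρ ∈ 𝒯_f` with `lg(ρ) < k` matter. -/
def prunedTree (f : ℕ → ℕ) (k : ℕ) (m : List ℕ → ℕ) : Set (List ℕ) :=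
  {σ | σ ∈ Tle f k ∧ ∀ ρ, ¬ ρ ++ [m ρ] <+: σ}

theorem nil_mem_prunedTree : [] ∈ prunedTree f k m := by
  simp [prunedTree, Tle, inT]

theorem mem_prunedTree_of_prefix (hσ : σ ∈ prunedTree f k m) (h : ρ <+: σ) :
    ρ ∈ prunedTree f k m :=
  ⟨mem_Tle_of_prefix hσ.1 h, fun τ hτ ↦ hσ.2 τ (hτ.trans h)⟩

theorem concat_mem_prunedTree (hρ : ρ ∈ prunedTree f k m) (hρc : ρ ++ [c] ∈ Tle f k)
    (hc : c ≠ m ρ) : ρ ++ [c] ∈ prunedTree f k m := by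
  refine ⟨hρc, fun τ hτ ↦ ?_⟩
  rcases List.prefix_concat_iff.1 hτ with heq | hpre
  · obtain ⟨rfl, hmc⟩ := List.append_singleton_inj.1 heq
    exact hc hmc.symm
  · exact hρ.2 τ hpre

theorem length_eq_of_maximal_prunedTree (hf : ∀ j < k, 0 < f j) (hρ : ρ ∈ prunedTree f k m)
    (hmax : ∀ σ ∈ prunedTree f k m, ρ <+: σ → σ = ρ) : ρ.length = k := by
  by_contra hne
  have hlt : ρ.length < k := lt_of_le_of_ne hρ.1.1 hne
  obtain ⟨c, hc, hcm⟩ : ∃ c ≤ f ρ.length, c ≠ m ρ := by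
    rcases eq_or_ne (m ρ) 0 with h | h
    · exact ⟨1, hf _ hlt, by simp [h]⟩
    · exact ⟨0, Nat.zero_le _, h.symm⟩
  have hρc := concat_mem_prunedTree hρ (concat_mem_Tle.2 ⟨hlt, hρ.1.2, hc⟩) hcm
  simpa using hmax _ hρc (List.prefix_append _ _)

theorem sBase_prunedTree (hf : ∀ j < k, 0 < f j) (hm : ∀ ρ, ρ.length < k → m ρ ≤ f ρ.length) :
    SBase f k (prunedTree f k m) := by
  refine ⟨fun σ hσ ↦ hσ.1, ⟨[], nil_mem_prunedTree⟩, fun σ hσ ρ ↦ mem_prunedTree_of_prefix hσ,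
    fun ρ ↦ length_eq_of_maximal_prunedTree hf, fun ρ _ hsplit ↦ ?_⟩
  have hlt : ρ.length < k := (concat_mem_Tle.1 (hsplit 0 (Nat.zero_le _)).1).1
  exact (hsplit (m ρ) (hm ρ hlt)).2 ρ List.prefix_rfl

theorem SBase.subset_prunedTree (hs : SBase f k s) (hsub : prunedTree f k m ⊆ s) :
    s ⊆ prunedTree f k m := by
  have ⟨hsT, _, _, _, hsplit⟩ := hs
  intro σ hσ
  induction σ using List.reverseRecOn with
  | nil => exact nil_mem_prunedTree
  | append_singleton ρ c ih =>
    have hρ : ρ ∈ prunedTree f k m := ih (hs.mem_of_prefix hσ (List.prefix_append _ _))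
    refine concat_mem_prunedTree hρ (hsT hσ) ?_
    rintro rfl
    have hlt : ρ.length < k := (concat_mem_Tle.1 (hsT hσ)).1
    refine hsplit ρ hρ.1 fun ℓ hℓ ↦ ?_
    rcases eq_or_ne ℓ (m ρ) with rfl | hne
    · exact hσ
    · exact hsub (concat_mem_prunedTree hρ (concat_mem_Tle.2 ⟨hlt, hρ.1.2, hℓ⟩) hne)

theorem prunedTree_mem_Sk (hf : ∀ j < k, 0 < f j) (hm : ∀ ρ, ρ.length < k → m ρ ≤ f ρ.length) :
    prunedTree f k m ∈ Sk f k :=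
  ⟨sBase_prunedTree hf hm, fun _ hs hsub ↦ (hs.subset_prunedTree hsub).antisymm hsub⟩

theorem exists_le_forall_not_concat_prefix (hf : ∀ j < k, 0 < f j) (η : List ℕ) :
    ∃ m : List ℕ → ℕ, (∀ ρ, ρ.length < k → m ρ ≤ f ρ.length) ∧ ∀ ρ, ¬ ρ ++ [m ρ] <+: η := by
  refine ⟨fun ρ ↦ if ρ ++ [0] <+: η then 1 else 0, fun ρ hρ ↦ ?_, fun ρ hρ ↦ ?_⟩
  · have := hf _ hρ
    dsimp only
    split_ifs <;> omega
  · by_cases h : ρ ++ [0] <+: η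
    · simp only [if_pos h] at hρ
      have heq : ρ ++ [0] = ρ ++ [1] :=
        (List.prefix_of_prefix_length_le h hρ (by simp)).eq_of_length (by simp)
      simp at heq
    · simp only [if_neg h] at hρ
      exact h hρ

theorem exists_mem_Sk_mem (hf : ∀ j < k, 0 < f j) (hη : η ∈ Tle f k) : ∃ s ∈ Sk f k, η ∈ s := by
  obtain ⟨m, hm, hmη⟩ := exists_le_forall_not_concat_prefix hf η
  exact ⟨prunedTree f k m, prunedTree_mem_Sk hf hm, hη, hmη⟩

theorem exists_mem_Sk_mem_notMem (hf : ∀ j < k, 0 < f j) (hη : η ∈ Tle f k) (hη' : η' ∈ Tle f k)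
    (hpre : ¬ η' <+: η) : ∃ s ∈ Sk f k, η ∈ s ∧ η' ∉ s := by
  obtain ⟨m, hm, hmη⟩ := exists_le_forall_not_concat_prefix hf η
  obtain rfl | ⟨ρ, c, rfl⟩ := η'.eq_nil_or_concat'
  · exact absurd List.nil_prefix hpre
  have hc : c ≤ f ρ.length := (concat_mem_Tle.1 hη').2.2
  refine ⟨prunedTree f k (Function.update m ρ c), prunedTree_mem_Sk hf ?_, ⟨hη, ?_⟩, fun h ↦ ?_⟩
  · exact (Function.forall_update_iff m fun τ a ↦ τ.length < k → a ≤ f τ.length).2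
      ⟨fun _ ↦ hc, fun τ _ ↦ hm τ⟩
  · exact (Function.forall_update_iff m fun τ a ↦ ¬ τ ++ [a] <+: η).2 ⟨hpre, fun τ _ ↦ hmη τ⟩
  · exact h.2 ρ (by simp)

theorem inter_Sk_eq_singleton_general (hf : ∀ j < k, 0 < f j) (hη : η ∈ Tle f k) :
    {η' | ∀ s ∈ Sk f k, η ∈ s → η' ∈ s} = {η' | η' <+: η} := by
  refine Set.Subset.antisymm (fun η' hmem ↦ ?_) fun η' hpre s hs hηs ↦ hs.1.mem_of_prefix hηs hpre
  obtain ⟨s, hs, hηs⟩ := exists_mem_Sk_mem hf hη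
  have hη' : η' ∈ Tle f k := hs.1.1 (hmem s hs hηs)
  by_contra hpre
  obtain ⟨t, ht, hηt, hη't⟩ := exists_mem_Sk_mem_notMem hf hη hη' hpre
  exact hη't (hmem t ht hηt)

/-- For `f ∈ ℱ`, `k ≥ 1` and `η ∈ 𝒯_{f,k}`, the intersection of all
`s ∈ 𝒮_{f,k}` containing `η` meets `𝒯_{f,k}` exactly in `{η}`. -/
theorem inter_Sk_eq_singleton
    (f : ℕ → ℕ) (hf : StrictMono f) (hf0 : ∀ k, 0 < f k)
    (k : ℕ) (hk : 1 ≤ k) (η : List ℕ) (hη : η ∈ Tk f k) :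
    {η' | η' ∈ Tk f k ∧ ∀ s ∈ Sk f k, η ∈ s → η' ∈ s} = {η} := by
  refine Set.eq_singleton_iff_unique_mem.2 ⟨⟨hη, fun _ _ ↦ id⟩, fun η' ⟨hη', hmem⟩ ↦ ?_⟩
  have hpre := (inter_Sk_eq_singleton_general (fun j _ ↦ hf0 j) ⟨hη.1.le, hη.2⟩).subset hmem
  exact hpre.eq_of_length (hη'.1.trans hη.1.symm)
end

section
/- Let f ∈ ℱ. The class of models of T_{0,f} has the amalgamation property: whenever A, M, N are models of T_{0,f} and g : A → M, h : A → N are embeddings of τ-structures, there is a model P of T_{0,f} and embeddings g' : M → P, h' : N → P with g' ∘ g = h' ∘ h. (The amalgam may be taken to be the free amalgam: the union of M and N over the common copy of A, with no R-edges between M ∖ g(A) and N ∖ h(A).) -/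
universe u

/-- An interpretation of the vocabulary
`τ = {P, Q, R, P_η (η ∈ 𝒯_f), Q_s (s ∈ 𝒮_f)}` on a domain `M`.
(The values of `Pn`/`Qs` off `𝒯_f`/`𝒮_f` are irrelevant.) -/
structure T0Str (M : Type u) where
  P : Set M
  Q : Set M
  Pn : List ℕ → Set M
  Qs : Set (List ℕ) → Set M
  R : M → M → Prop

/-- `S` is a model of the universal theory `T_{0,f}` (Definition 2.3). -/
def IsModelT0 (f : ℕ → ℕ) {M : Type u} (S : T0Str M) : Prop :=
  -- (a) P, Q partition M
  (S.P ∪ S.Q = Set.univ ∧ Disjoint S.P S.Q) ∧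
  -- (b) for each k, ⟨P_η : η ∈ 𝒯_{f,k}⟩ partitions P
  (∀ k, (⋃ η ∈ Tk f k, S.Pn η) = S.P ∧
    ∀ η ∈ Tk f k, ∀ η' ∈ Tk f k, η ≠ η' → Disjoint (S.Pn η) (S.Pn η')) ∧
  -- (c) for each k ≥ 1, ⟨Q_s : s ∈ 𝒮_{f,k}⟩ partitions Q
  (∀ k, 1 ≤ k → (⋃ s ∈ Sk f k, S.Qs s) = S.Q ∧
    ∀ s ∈ Sk f k, ∀ s' ∈ Sk f k, s ≠ s' → Disjoint (S.Qs s) (S.Qs s')) ∧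
  -- (d) monotonicity
  (∀ η ∈ Tf f, ∀ η' ∈ Tf f, η <+: η' → S.Pn η' ⊆ S.Pn η) ∧
  (∀ s ∈ Sf f, ∀ s' ∈ Sf f, s ⊆ s' → S.Qs s' ⊆ S.Qs s) ∧
  -- (e) R ⊆ Q × P
  (∀ b a, S.R b a → b ∈ S.Q ∧ a ∈ S.P) ∧
  -- (e) no element of Q connects into every piece of a successor partition
  (∀ k, ∀ η ∈ Tk f k, ∀ bv : ℕ → M,
    (∀ ℓ ≤ f k, bv ℓ ∈ S.Pn (η ++ [ℓ])) →
      ¬ ∃ x ∈ S.Q, ∀ ℓ ≤ f k, S.R x (bv ℓ)) ∧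
  -- (e) edges from Q_s go only into P_η with η ∈ s
  (∀ b a, S.R b a → ∀ k, 1 ≤ k → ∀ s ∈ Sk f k, b ∈ S.Qs s →
    ∀ η ∈ Tk f k, a ∈ S.Pn η → η ∈ s)

/-- An embedding of `τ`-structures: injective and preserving all atomic
formulas in both directions. -/
def IsEmb (f : ℕ → ℕ) {A B : Type u} (SA : T0Str A) (SB : T0Str B)
    (g : A → B) : Prop :=
  Function.Injective g ∧
  (∀ a, a ∈ SA.P ↔ g a ∈ SB.P) ∧
  (∀ a, a ∈ SA.Q ↔ g a ∈ SB.Q) ∧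
  (∀ η ∈ Tf f, ∀ a, a ∈ SA.Pn η ↔ g a ∈ SB.Pn η) ∧
  (∀ s ∈ Sf f, ∀ a, a ∈ SA.Qs s ↔ g a ∈ SB.Qs s) ∧
  (∀ a b, SA.R a b ↔ SB.R (g a) (g b))

/-!
Every axiom of `T_{0,f}` restricts a single point or a single `R`-edge, except the one forbidding an
`x ∈ Q` joined to all pieces `P_{η⌢⟨ℓ⟩}`. That one follows from the others: if `x ∈ Q_s` with
`s ∈ 𝒮_{f, lg(η) + 1}`, then all `η⌢⟨ℓ⟩` would lie in `s`, whereas `s` omits one of them. Hence a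
structure each of whose points and edges lies in an embedded model is itself a model, and the free
amalgam of two models is such a structure.
-/

section LocalAxioms

variable {f : ℕ → ℕ} {M N : Type u} {S : T0Str M} {T : T0Str N}

/-- The one-variable axioms of `T_{0,f}` at the point `x`: clauses (a)–(d) of `IsModelT0`. -/
structure IsTypedAt (f : ℕ → ℕ) (S : T0Str M) (x : M) : Prop where
  mem_P_or_mem_Q : x ∈ S.P ∨ x ∈ S.Q
  notMem_Q : x ∈ S.P → x ∉ S.Q
  mem_P_iff : ∀ k, x ∈ S.P ↔ ∃ η ∈ Tk f k, x ∈ S.Pn η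
  Pn_unique : ∀ k, ∀ η ∈ Tk f k, ∀ η' ∈ Tk f k, x ∈ S.Pn η → x ∈ S.Pn η' → η = η'
  mem_Q_iff : ∀ k, 1 ≤ k → (x ∈ S.Q ↔ ∃ s ∈ Sk f k, x ∈ S.Qs s)
  Qs_unique : ∀ k, 1 ≤ k → ∀ s ∈ Sk f k, ∀ s' ∈ Sk f k, x ∈ S.Qs s → x ∈ S.Qs s' → s = s'
  Pn_anti : ∀ η ∈ Tf f, ∀ η' ∈ Tf f, η <+: η' → x ∈ S.Pn η' → x ∈ S.Pn η
  Qs_anti : ∀ s ∈ Sf f, ∀ s' ∈ Sf f, s ⊆ s' → x ∈ S.Qs s' → x ∈ S.Qs s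

/-- The axioms in (e) of `IsModelT0` on a single pair `(b, a) ∈ R`. -/
structure IsLegalEdge (f : ℕ → ℕ) (S : T0Str M) (b a : M) : Prop where
  mem_Q : b ∈ S.Q
  mem_P : a ∈ S.P
  mem_of_mem_Qs : ∀ k, 1 ≤ k → ∀ s ∈ Sk f k, b ∈ S.Qs s → ∀ η ∈ Tk f k, a ∈ S.Pn η → η ∈ s

theorem append_singleton_mem_Tk {k l : ℕ} {η : List ℕ} (hη : η ∈ Tk f k) (hl : l ≤ f k) :
    η ++ [l] ∈ Tk f (k + 1) := by
  obtain ⟨rfl, hη⟩ := hη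
  refine ⟨by simp, fun i ↦ ?_⟩
  obtain hi | hi := Nat.lt_succ_iff_lt_or_eq.1 (i.2.trans_eq List.length_append)
  · simpa [List.getElem_append_left hi] using hη ⟨i, hi⟩
  · simpa [hi] using hl

theorem exists_append_singleton_notMem {k : ℕ} {s : Set (List ℕ)} {η : List ℕ}
    (hs : s ∈ Sk f (k + 1)) (hη : η ∈ Tk f k) : ∃ l ≤ f k, η ++ [l] ∉ s := by
  obtain ⟨rfl, hη⟩ := hη
  simpa using hs.1.2.2.2.2 η ⟨Nat.le_succ _, hη⟩

theorem IsModelT0.isTypedAt (hS : IsModelT0 f S) (x : M) : IsTypedAt f S x := by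
  obtain ⟨⟨hPQ, hdisj⟩, hPn, hQs, hPn_anti, hQs_anti, -, -, -⟩ := hS
  exact
    { mem_P_or_mem_Q := hPQ.ge (Set.mem_univ x)
      notMem_Q := fun hP hQ ↦ hdisj.notMem_of_mem_left hP hQ
      mem_P_iff := fun k ↦ by simp [← (hPn k).1]
      Pn_unique := fun k η hη η' hη' hx hx' ↦ by_contra fun hne ↦
        ((hPn k).2 η hη η' hη' hne).notMem_of_mem_left hx hx'
      mem_Q_iff := fun k hk ↦ by simp [← (hQs k hk).1]
      Qs_unique := fun k hk s hs s' hs' hx hx' ↦ by_contra fun hne ↦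
        ((hQs k hk).2 s hs s' hs' hne).notMem_of_mem_left hx hx'
      Pn_anti := fun η hη η' hη' h hx ↦ hPn_anti η hη η' hη' h hx
      Qs_anti := fun s hs s' hs' h hx ↦ hQs_anti s hs s' hs' h hx }

theorem IsModelT0.isLegalEdge (hS : IsModelT0 f S) {b a : M} (hba : S.R b a) :
    IsLegalEdge f S b a := by
  obtain ⟨-, -, -, -, -, hQP, -, hmem⟩ := hS
  exact ⟨(hQP b a hba).1, (hQP b a hba).2, hmem b a hba⟩

theorem exists_not_rel_of_isLegalEdge (hedge : ∀ b a, S.R b a → IsLegalEdge f S b a) {x : M}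
    (hx : IsTypedAt f S x) (hxQ : x ∈ S.Q) {k : ℕ} {η : List ℕ} (hη : η ∈ Tk f k) {b : ℕ → M}
    (hb : ∀ l ≤ f k, b l ∈ S.Pn (η ++ [l])) : ∃ l ≤ f k, ¬ S.R x (b l) := by
  have hk : 1 ≤ k + 1 := Nat.le_add_left 1 k
  obtain ⟨s, hs, hxs⟩ := (hx.mem_Q_iff (k + 1) hk).1 hxQ
  obtain ⟨l, hl, hls⟩ := exists_append_singleton_notMem hs hη
  exact ⟨l, hl, fun hR ↦ hls <| (hedge x (b l) hR).mem_of_mem_Qs (k + 1) hk s hs hxs _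
    (append_singleton_mem_Tk hη hl) (hb l hl)⟩

theorem isModelT0_of_isTypedAt_of_isLegalEdge (hpt : ∀ x, IsTypedAt f S x)
    (hedge : ∀ b a, S.R b a → IsLegalEdge f S b a) : IsModelT0 f S := by
  refine ⟨⟨?_, ?_⟩, fun k ↦ ⟨?_, fun η hη η' hη' hne ↦ ?_⟩,
    fun k hk ↦ ⟨?_, fun s hs s' hs' hne ↦ ?_⟩,
    fun η hη η' hη' h x hx ↦ (hpt x).Pn_anti η hη η' hη' h hx,
    fun s hs s' hs' h x hx ↦ (hpt x).Qs_anti s hs s' hs' h hx,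
    fun b a hba ↦ ⟨(hedge b a hba).mem_Q, (hedge b a hba).mem_P⟩, ?_,
    fun b a hba ↦ (hedge b a hba).mem_of_mem_Qs⟩
  · exact Set.eq_univ_of_forall fun x ↦ (hpt x).mem_P_or_mem_Q
  · exact Set.disjoint_left.2 fun x ↦ (hpt x).notMem_Q
  · ext x
    simp [(hpt x).mem_P_iff k]
  · exact Set.disjoint_left.2 fun x hx hx' ↦ hne ((hpt x).Pn_unique k η hη η' hη' hx hx')
  · ext x
    simp [(hpt x).mem_Q_iff k hk]
  · exact Set.disjoint_left.2 fun x hx hx' ↦ hne ((hpt x).Qs_unique k hk s hs s' hs' hx hx')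
  · rintro k η hη b hb ⟨x, hxQ, hR⟩
    obtain ⟨l, hl, hnR⟩ := exists_not_rel_of_isLegalEdge hedge (hpt x) hxQ hη hb
    exact hnR (hR l hl)

theorem IsTypedAt.map {g : M → N} (hg : IsEmb f S T g) {x : M} (hx : IsTypedAt f S x) :
    IsTypedAt f T (g x) := by
  obtain ⟨-, hP, hQ, hPn, hQs, -⟩ := hg
  have hPn_iff {k : ℕ} {η : List ℕ} (hη : η ∈ Tk f k) : g x ∈ T.Pn η ↔ x ∈ S.Pn η :=
    (hPn η hη.2 x).symm
  have hQs_iff {k : ℕ} {s : Set (List ℕ)} (hk : 1 ≤ k) (hs : s ∈ Sk f k) :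
      g x ∈ T.Qs s ↔ x ∈ S.Qs s :=
    (hQs s ⟨k, hk, hs⟩ x).symm
  exact
    { mem_P_or_mem_Q := hx.mem_P_or_mem_Q.imp (hP x).1 (hQ x).1
      notMem_Q := fun hxP hxQ ↦ hx.notMem_Q ((hP x).2 hxP) ((hQ x).2 hxQ)
      mem_P_iff := fun k ↦ by
        rw [← hP, hx.mem_P_iff k]
        exact exists_congr fun η ↦ and_congr_right fun hη ↦ (hPn_iff hη).symm
      Pn_unique := fun k η hη η' hη' h h' ↦
        hx.Pn_unique k η hη η' hη' ((hPn_iff hη).1 h) ((hPn_iff hη').1 h')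
      mem_Q_iff := fun k hk ↦ by
        rw [← hQ, hx.mem_Q_iff k hk]
        exact exists_congr fun s ↦ and_congr_right fun hs ↦ (hQs_iff hk hs).symm
      Qs_unique := fun k hk s hs s' hs' h h' ↦
        hx.Qs_unique k hk s hs s' hs' ((hQs_iff hk hs).1 h) ((hQs_iff hk hs').1 h')
      Pn_anti := fun η hη η' hη' h hx' ↦
        (hPn η hη x).1 (hx.Pn_anti η hη η' hη' h ((hPn η' hη' x).2 hx'))
      Qs_anti := fun s hs s' hs' h hx' ↦
        (hQs s hs x).1 (hx.Qs_anti s hs s' hs' h ((hQs s' hs' x).2 hx')) }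

theorem IsLegalEdge.map {g : M → N} (hg : IsEmb f S T g) {b a : M} (hba : IsLegalEdge f S b a) :
    IsLegalEdge f T (g b) (g a) := by
  obtain ⟨-, hP, hQ, hPn, hQs, -⟩ := hg
  exact ⟨(hQ b).1 hba.mem_Q, (hP a).1 hba.mem_P, fun k hk s hs hb η hη ha ↦
    hba.mem_of_mem_Qs k hk s hs ((hQs s ⟨k, hk, hs⟩ b).2 hb) η hη ((hPn η hη.2 a).2 ha)⟩

theorem isModelT0_of_locally_isModelT0
    (hpt : ∀ x, ∃ (N : Type u) (T : T0Str N) (g : N → M),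
      IsModelT0 f T ∧ IsEmb f T S g ∧ x ∈ Set.range g)
    (hedge : ∀ b a, S.R b a → ∃ (N : Type u) (T : T0Str N) (g : N → M),
      IsModelT0 f T ∧ IsEmb f T S g ∧ b ∈ Set.range g ∧ a ∈ Set.range g) :
    IsModelT0 f S := by
  refine isModelT0_of_isTypedAt_of_isLegalEdge (fun x ↦ ?_) fun b a hba ↦ ?_
  · obtain ⟨N, T, g, hT, hg, y, rfl⟩ := hpt x
    exact (hT.isTypedAt y).map hg
  · obtain ⟨N, T, g, hT, hg, ⟨b, rfl⟩, ⟨a, rfl⟩⟩ := hedge b a hba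
    have hR : T.R b a := (hg.2.2.2.2.2 b a).2 hba
    exact (hT.isLegalEdge hR).map hg

end LocalAxioms

section DisjointAmalgam

variable {A M N P : Type*} {g : A → M} {h : A → N} {g' : M → P} {h' : N → P}

/-- The square formed by `g, h, g', h'` exhibits `P` as the union of copies of `M` and `N`
intersecting exactly in the common copy of `A`. -/
structure IsDisjointAmalgam (g : A → M) (h : A → N) (g' : M → P) (h' : N → P) : Prop where
  injective_left : Function.Injective g'
  injective_right : Function.Injective h'
  eq_iff : ∀ m n, g' m = h' n ↔ ∃ a, g a = m ∧ h a = n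
  range_union_range : Set.range g' ∪ Set.range h' = Set.univ

namespace IsDisjointAmalgam

theorem symm (H : IsDisjointAmalgam g h g' h') : IsDisjointAmalgam h g h' g' where
  injective_left := H.injective_right
  injective_right := H.injective_left
  eq_iff n m := by simp only [eq_comm (a := h' n), H.eq_iff, and_comm]
  range_union_range := by rw [Set.union_comm, H.range_union_range]

theorem comp_eq (H : IsDisjointAmalgam g h g' h') : g' ∘ g = h' ∘ h :=
  funext fun a ↦ (H.eq_iff (g a) (h a)).2 ⟨a, rfl, rfl⟩

theorem mem_iff_mem_image_union_image (H : IsDisjointAmalgam g h g' h') {X : Set M} {Y : Set N}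
    (hXY : ∀ a, g a ∈ X ↔ h a ∈ Y) (m : M) : m ∈ X ↔ g' m ∈ g' '' X ∪ h' '' Y := by
  refine ⟨fun hm ↦ Or.inl ⟨m, hm, rfl⟩, ?_⟩
  rintro (hm | ⟨n, hn, hnm⟩)
  · exact (H.injective_left.mem_set_image).1 hm
  · obtain ⟨a, rfl, rfl⟩ := (H.eq_iff m n).1 hnm.symm
    exact (hXY a).2 hn

theorem rel_iff_map_or_map (H : IsDisjointAmalgam g h g' h') {r : M → M → Prop}
    {s : N → N → Prop} (hrs : ∀ a b, r (g a) (g b) ↔ s (h a) (h b)) (m₁ m₂ : M) :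
    r m₁ m₂ ↔ Relation.Map r g' g' (g' m₁) (g' m₂) ∨ Relation.Map s h' h' (g' m₁) (g' m₂) := by
  refine ⟨fun hr ↦ Or.inl ⟨m₁, m₂, hr, rfl, rfl⟩, ?_⟩
  rintro (⟨y₁, y₂, hr, h₁, h₂⟩ | ⟨n₁, n₂, hs, h₁, h₂⟩)
  · rwa [← H.injective_left h₁, ← H.injective_left h₂]
  · obtain ⟨a, rfl, rfl⟩ := (H.eq_iff m₁ n₁).1 h₁.symm
    obtain ⟨b, rfl, rfl⟩ := (H.eq_iff m₂ n₂).1 h₂.symm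
    exact (hrs a b).2 hs

theorem notMem_range_right (H : IsDisjointAmalgam g h g' h') {m : M} (hm : m ∉ Set.range g) :
    g' m ∉ Set.range h' := by
  rintro ⟨n, hn⟩
  obtain ⟨a, ha, -⟩ := (H.eq_iff m n).1 hn.symm
  exact hm ⟨a, ha⟩

end IsDisjointAmalgam

end DisjointAmalgam

section FreeAmalgam

variable {A M N P : Type u} {g : A → M} {h : A → N} {g' : M → P} {h' : N → P}

open CategoryTheory Limits.Types in
theorem exists_isDisjointAmalgam (hg : Function.Injective g) (hh : Function.Injective h) :
    ∃ (P : Type u) (g' : M → P) (h' : N → P), IsDisjointAmalgam g h g' h' := by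
  have : Mono (↾g) := (mono_iff_injective _).2 hg
  have : Mono (↾h) := (mono_iff_injective _).2 hh
  refine ⟨Pushout (↾g) (↾h), Pushout.inl (↾g) (↾h), Pushout.inr (↾g) (↾h),
    (mono_iff_injective _).1 inferInstance, (mono_iff_injective _).1 inferInstance,
    Pushout.inl_eq_inr_iff (↾g) (↾h), Set.eq_univ_of_forall ?_⟩
  rintro ⟨m | n⟩
  · exact Or.inl ⟨m, rfl⟩
  · exact Or.inr ⟨n, rfl⟩

namespace T0Str

/-- The structure on `P` whose predicates and relation are the unions of the images of those of
`SM` and `SN`. When `P` is a disjoint amalgam of `M` and `N` this is the free amalgam. -/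
def glue (SM : T0Str M) (SN : T0Str N) (g' : M → P) (h' : N → P) : T0Str P where
  P := g' '' SM.P ∪ h' '' SN.P
  Q := g' '' SM.Q ∪ h' '' SN.Q
  Pn η := g' '' SM.Pn η ∪ h' '' SN.Pn η
  Qs s := g' '' SM.Qs s ∪ h' '' SN.Qs s
  R b a := Relation.Map SM.R g' g' b a ∨ Relation.Map SN.R h' h' b a

variable {f : ℕ → ℕ} {SA : T0Str A} {SM : T0Str M} {SN : T0Str N}

theorem glue_comm : glue SM SN g' h' = glue SN SM h' g' := by
  simp only [glue, Set.union_comm, or_comm]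

theorem isEmb_glue_left (H : IsDisjointAmalgam g h g' h') (hg : IsEmb f SA SM g)
    (hh : IsEmb f SA SN h) : IsEmb f SM (glue SM SN g' h') g' := by
  obtain ⟨-, hgP, hgQ, hgPn, hgQs, hgR⟩ := hg
  obtain ⟨-, hhP, hhQ, hhPn, hhQs, hhR⟩ := hh
  exact ⟨H.injective_left,
    H.mem_iff_mem_image_union_image fun a ↦ (hgP a).symm.trans (hhP a),
    H.mem_iff_mem_image_union_image fun a ↦ (hgQ a).symm.trans (hhQ a),
    fun η hη ↦ H.mem_iff_mem_image_union_image fun a ↦ (hgPn η hη a).symm.trans (hhPn η hη a),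
    fun s hs ↦ H.mem_iff_mem_image_union_image fun a ↦ (hgQs s hs a).symm.trans (hhQs s hs a),
    H.rel_iff_map_or_map fun a b ↦ (hgR a b).symm.trans (hhR a b)⟩

theorem isEmb_glue_right (H : IsDisjointAmalgam g h g' h') (hg : IsEmb f SA SM g)
    (hh : IsEmb f SA SN h) : IsEmb f SN (glue SM SN g' h') h' :=
  glue_comm (SM := SN) ▸ isEmb_glue_left H.symm hh hg

theorem mem_range_of_glue_R {b a : P} (hba : (glue SM SN g' h').R b a) :
    b ∈ Set.range g' ∧ a ∈ Set.range g' ∨ b ∈ Set.range h' ∧ a ∈ Set.range h' := by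
  obtain ⟨b, a, -, rfl, rfl⟩ | ⟨b, a, -, rfl, rfl⟩ := hba
  · exact Or.inl ⟨⟨b, rfl⟩, ⟨a, rfl⟩⟩
  · exact Or.inr ⟨⟨b, rfl⟩, ⟨a, rfl⟩⟩

theorem isModelT0_glue (hM : IsModelT0 f SM) (hN : IsModelT0 f SN)
    (hcover : Set.range g' ∪ Set.range h' = Set.univ) (hg' : IsEmb f SM (glue SM SN g' h') g')
    (hh' : IsEmb f SN (glue SM SN g' h') h') : IsModelT0 f (glue SM SN g' h') := by
  refine isModelT0_of_locally_isModelT0 (fun x ↦ ?_) fun b a hba ↦ ?_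
  · obtain hx | hx := hcover.ge (Set.mem_univ x)
    · exact ⟨M, SM, g', hM, hg', hx⟩
    · exact ⟨N, SN, h', hN, hh', hx⟩
  · obtain hrange | hrange := mem_range_of_glue_R hba
    · exact ⟨M, SM, g', hM, hg', hrange⟩
    · exact ⟨N, SN, h', hN, hh', hrange⟩

theorem not_glue_R_of_notMem_range (H : IsDisjointAmalgam g h g' h') {m : M} {n : N}
    (hm : m ∉ Set.range g) (hn : n ∉ Set.range h) :
    ¬ (glue SM SN g' h').R (g' m) (h' n) ∧ ¬ (glue SM SN g' h').R (h' n) (g' m) := by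
  have hm' := H.notMem_range_right hm
  have hn' := H.symm.notMem_range_right hn
  exact ⟨fun hR ↦ (mem_range_of_glue_R hR).elim (fun h ↦ hn' h.2) (fun h ↦ hm' h.1),
    fun hR ↦ (mem_range_of_glue_R hR).elim (fun h ↦ hn' h.1) (fun h ↦ hm' h.2)⟩

end T0Str

end FreeAmalgam

theorem amalgamation_general {f : ℕ → ℕ} {A M N : Type u} {SA : T0Str A} {SM : T0Str M}
    {SN : T0Str N} (hM : IsModelT0 f SM) (hN : IsModelT0 f SN) {g : A → M} {h : A → N}
    (hg : IsEmb f SA SM g) (hh : IsEmb f SA SN h) :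
    ∃ (P : Type u) (SP : T0Str P), IsModelT0 f SP ∧ ∃ (g' : M → P) (h' : N → P),
      IsEmb f SM SP g' ∧ IsEmb f SN SP h' ∧ IsDisjointAmalgam g h g' h' ∧
      ∀ m ∉ Set.range g, ∀ n ∉ Set.range h, ¬ SP.R (g' m) (h' n) ∧ ¬ SP.R (h' n) (g' m) := by
  obtain ⟨P, g', h', H⟩ := exists_isDisjointAmalgam hg.1 hh.1
  have hg' := T0Str.isEmb_glue_left H hg hh
  have hh' := T0Str.isEmb_glue_right H hg hh
  exact ⟨P, T0Str.glue SM SN g' h', T0Str.isModelT0_glue hM hN H.range_union_range hg' hh',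
    g', h', hg', hh', H, fun _ hm _ hn ↦ T0Str.not_glue_R_of_notMem_range H hm hn⟩

/-- **Part of Claim 2.5.** The class of models of `T_{0,f}` has the
amalgamation property: embeddings `g : A → M`, `h : A → N` of models of
`T_{0,f}` can be completed to embeddings `g' : M → P`, `h' : N → P` into a
model `P` of `T_{0,f}` with `g' ∘ g = h' ∘ h`. -/
theorem amalgamation
    (f : ℕ → ℕ) (hf : StrictMono f) (hf0 : ∀ k, 0 < f k)
    (A M N : Type u) (SA : T0Str A) (SM : T0Str M) (SN : T0Str N)
    (hA : IsModelT0 f SA) (hM : IsModelT0 f SM) (hN : IsModelT0 f SN)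
    (g : A → M) (h : A → N)
    (hg : IsEmb f SA SM g) (hh : IsEmb f SA SN h) :
    ∃ (P : Type u) (SP : T0Str P), IsModelT0 f SP ∧
      ∃ (g' : M → P) (h' : N → P),
        IsEmb f SM SP g' ∧ IsEmb f SN SP h' ∧ g' ∘ g = h' ∘ h := by
  obtain ⟨P, SP, hP, g', h', hg', hh', H, -⟩ := amalgamation_general hM hN hg hh
  exact ⟨P, SP, hP, g', h', hg', hh', H.comp_eq⟩
end

section
/- Let μ be an infinite cardinal, let 2 ≤ k < ℓ < ω, and let λ = μ^{+ℓ} (the ℓ-th cardinal successor of μ). Then for every function F assigning to each k-element subset v of λ a set F(v) ⊆ λ with v ⊆ F(v) and |F(v)| ≤ μ, there exists a (k+1)-element subset w of λ such that for every k-element subset v of w we have w ⊄ F(v); equivalently, for each α ∈ w, α ∉ F(w ∖ {α}). -/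
open Cardinal

/-!
Build the free set one point at a time. From a set of size `κ⁺ⁿ⁺¹` pick a subset `B` of size `κ⁺ⁿ`;
the values `F v` at finite subsets `v` of `B` together cover at most `κ⁺ⁿ` points, so some point `x`
outside `B` is avoided by all of them. Fixing `x` as one of the arguments of `F` leaves a
set mapping in one variable fewer on `B`, and adjoining `x` to a free set for it inside `B` gives a
free set for `F`.
-/

section SetMapping

variable {α : Type*} {F : Finset α → Set α} {n : ℕ}

/-- `H` is free for the set mapping `F` of order `n`, i.e. `F v` meets `H` only inside `v` for every
`n`-element `v ⊆ H`. A set mapping on `n`-element subsets is encoded as a function on all finite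
subsets whose values at those of other sizes are irrelevant. -/
def IsFreeSet (F : Finset α → Set α) (n : ℕ) (H : Set α) : Prop :=
  ∀ v : Finset α, ↑v ⊆ H → v.card = n → F v ∩ H ⊆ v

theorem isFreeSet_card (F : Finset α → Set α) (w : Finset α) : IsFreeSet F w.card w := by
  intro v hvw hv
  obtain rfl : v = w := Finset.eq_of_subset_of_card_le (Finset.coe_subset.mp hvw) hv.ge
  exact Set.inter_subset_right

theorem IsFreeSet.not_subset {v w : Finset α} (hw : IsFreeSet F n w) (hvw : v ⊆ w)
    (hv : v.card = n) (hn : n < w.card) : ¬ (w : Set α) ⊆ F v := by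
  intro hwF
  have hwv : w ⊆ v := fun a ha ↦ hw v (Finset.coe_subset.mpr hvw) hv ⟨hwF ha, ha⟩
  exact (Finset.card_le_card hwv).not_gt (hv ▸ hn)

protected theorem IsFreeSet.insert [DecidableEq α] {H : Set α} {x : α} (hH : IsFreeSet F (n + 1) H)
    (hx : ∀ v : Finset α, ↑v ⊆ H → v.card = n + 1 → x ∉ F v)
    (hHx : IsFreeSet (fun u ↦ F (insert x u)) n H) : IsFreeSet F (n + 1) (insert x H) := by
  rintro v hvH hvn a ⟨haF, haH⟩
  by_cases hxv : x ∈ v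
  · obtain rfl | haH := haH
    · exact hxv
    · have hvH' : ↑(v.erase x) ⊆ H := by
        rwa [Finset.coe_erase, Set.sdiff_singleton_subset_iff]
      have haF' : a ∈ F (insert x (v.erase x)) := by rwa [Finset.insert_erase hxv]
      exact Finset.mem_of_mem_erase (hHx (v.erase x) hvH' (by simp [hxv, hvn]) ⟨haF', haH⟩)
  · replace hvH : ↑v ⊆ H := (Set.subset_insert_iff_of_notMem hxv).mp hvH
    obtain rfl | haH := haH
    · exact absurd haF (hx v hvH hvn)
    · exact hH v hvH hvn ⟨haF, haH⟩

end SetMapping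

section Cardinality

variable {α : Type u} {B : Set α}

theorem mk_setOf_finset_coe_subset_le (hB : B.Infinite) : #{v : Finset α | ↑v ⊆ B} ≤ #B := by
  classical
  have := hB.to_subtype
  have hrange : {v : Finset α | ↑v ⊆ B} ⊆
      Set.range (Finset.map (Function.Embedding.subtype (· ∈ B))) :=
    fun v hv ↦ ⟨v.subtype (· ∈ B), Finset.subtype_map_of_mem fun _ ha ↦ hv ha⟩
  calc
    #{v : Finset α | ↑v ⊆ B} ≤ #(Finset B) := (mk_le_mk_of_subset hrange).trans mk_range_le
    _ = #B := mk_finset_of_infinite B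

theorem mk_biUnion_finset_le {S : Set (Finset α)} {F : Finset α → Set α} (hB : B.Infinite)
    (hS : ∀ v ∈ S, ↑v ⊆ B) (hF : ∀ v ∈ S, #(F v) ≤ #B) : #(⋃ v ∈ S, F v) ≤ #B :=
  calc
    #(⋃ v ∈ S, F v) ≤ #S * ⨆ v : S, #(F v) := mk_biUnion_le F S
    _ ≤ #B * #B :=
      mul_le_mul' ((mk_le_mk_of_subset hS).trans (mk_setOf_finset_coe_subset_le hB))
        (ciSup_le' fun v ↦ hF v v.2)
    _ = #B := mul_eq_self (infinite_iff.mp hB.to_subtype)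

theorem exists_mem_forall_finset_subset_notMem {A : Set α} {F : Finset α → Set α} {n : ℕ}
    (hB : B.Infinite) (hBA : #B < #A) (hF : ∀ v : Finset α, ↑v ⊆ B → v.card = n → #(F v) ≤ #B) :
    ∃ x ∈ A, x ∉ B ∧ ∀ v : Finset α, ↑v ⊆ B → v.card = n → x ∉ F v := by
  let S : Set (Finset α) := {v | ↑v ⊆ B ∧ v.card = n}
  have hS : #(⋃ v ∈ S, F v) ≤ #B :=
    mk_biUnion_finset_le hB (fun _ hv ↦ hv.1) fun v hv ↦ hF v hv.1 hv.2
  have hlt : #(B ∪ ⋃ v ∈ S, F v : Set α) < #A :=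
    calc
      #(B ∪ ⋃ v ∈ S, F v : Set α) ≤ #B + #(⋃ v ∈ S, F v) := mk_union_le _ _
      _ ≤ #B := add_le_of_le (infinite_iff.mp hB.to_subtype) le_rfl hS
      _ < #A := hBA
  obtain ⟨x, hxA, hx⟩ := sdiff_nonempty_of_mk_lt_mk hlt
  refine ⟨x, hxA, fun hxB ↦ hx (.inl hxB), fun v hvB hvn hxF ↦ hx (.inr ?_)⟩
  exact Set.mem_biUnion (show v ∈ S from ⟨hvB, hvn⟩) hxF

end Cardinality

theorem free_set_theorem_general {α : Type u} {κ : Cardinal.{u}} (hκ : ℵ₀ ≤ κ) (n : ℕ) (A : Set α)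
    (hA : Order.succ^[n] κ ≤ #A) (F : Finset α → Set α)
    (hF : ∀ v : Finset α, ↑v ⊆ A → v.card = n → #(F v) < κ) :
    ∃ w : Finset α, ↑w ⊆ A ∧ w.card = n + 1 ∧ IsFreeSet F n w := by
  classical
  induction n generalizing A F with
  | zero =>
    obtain ⟨x, hxA, hxF⟩ := sdiff_nonempty_of_mk_lt_mk ((hF ∅ (by simp) rfl).trans_le hA)
    refine ⟨{x}, by simpa using hxA, rfl, fun v _ hv a ⟨haF, hax⟩ ↦ ?_⟩
    obtain rfl : a = x := by simpa using hax
    obtain rfl := Finset.card_eq_zero.mp hv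
    exact absurd haF hxF
  | succ n ih =>
    rw [Function.iterate_succ_apply'] at hA
    have hκn : κ ≤ Order.succ^[n] κ := Function.id_le_iterate_of_id_le Order.le_succ n κ
    obtain ⟨B, hBA, hB⟩ := le_mk_iff_exists_subset.mp ((Order.le_succ _).trans hA)
    have hB_inf : B.Infinite := Set.infinite_coe_iff.mp (infinite_iff.mpr (hB ▸ hκ.trans hκn))
    have hF_le : ∀ v : Finset α, ↑v ⊆ B → v.card = n + 1 → #(F v) ≤ #B := fun v hvB hv ↦
      (hF v (hvB.trans hBA) hv).le.trans (hB ▸ hκn)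
    obtain ⟨x, hxA, hxB, hxF⟩ :=
      exists_mem_forall_finset_subset_notMem hB_inf (hB ▸ Order.succ_le_iff.mp hA) hF_le
    have insert_subset : ∀ u : Finset α, ↑u ⊆ B → ↑(insert x u) ⊆ A := fun u hu ↦ by
      simpa using Set.insert_subset hxA (hu.trans hBA)
    have card_insert : ∀ u : Finset α, ↑u ⊆ B → (insert x u).card = u.card + 1 := fun u hu ↦
      Finset.card_insert_of_notMem fun hxu ↦ hxB (hu hxu)
    obtain ⟨w, hwB, hwn, hw⟩ := ih B hB.ge (fun u ↦ F (insert x u)) fun u hu hun ↦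
      hF (insert x u) (insert_subset u hu) (by rw [card_insert u hu, hun])
    refine ⟨insert x w, insert_subset w hwB, by rw [card_insert w hwB, hwn], ?_⟩
    rw [Finset.coe_insert]
    exact (hwn ▸ isFreeSet_card F w).insert (fun v hvw ↦ hxF v (hvw.trans hwB)) hw

/-- **Free set theorem** `(λ, k, μ⁺) → k+1` for `λ = μ⁺ℓ`, `2 ≤ k < ℓ`
(Kuratowski–Sierpiński).  Let `μ` be an infinite cardinal, `2 ≤ k < ℓ < ω`,
and let `L` be a set of cardinality `μ⁺ℓ` (the `ℓ`-th cardinal successor of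
`μ`).  Then for every `F` assigning to each `k`-element subset `v` of `L` a
set `F v ⊆ L` with `v ⊆ F v` and `|F v| ≤ μ`, there is a `(k+1)`-element
subset `w` of `L` such that `w ⊄ F v` for every `k`-element subset `v ⊆ w`. -/
theorem free_set_theorem
    (μ : Cardinal.{u}) (hμ : ℵ₀ ≤ μ) (k ℓ : ℕ) (hk : 2 ≤ k) (hkl : k < ℓ)
    (L : Type u) (hL : #L = (Order.succ : Cardinal.{u} → Cardinal.{u})^[ℓ] μ)
    (F : Finset L → Set L)
    (hF1 : ∀ v : Finset L, v.card = k → ↑v ⊆ F v)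
    (hF2 : ∀ v : Finset L, v.card = k → #(F v) ≤ μ) :
    ∃ w : Finset L, w.card = k + 1 ∧
      ∀ v ⊆ w, v.card = k → ¬ (↑w : Set L) ⊆ F v := by
  have hA : Order.succ^[k] (Order.succ μ) ≤ #(Set.univ : Set L) := by
    rw [mk_univ, hL, ← Function.iterate_succ_apply]
    exact Function.monotone_iterate_of_id_le Order.le_succ hkl μ
  obtain ⟨w, -, hw, hfree⟩ := free_set_theorem_general (hμ.trans (Order.le_succ μ)) k .univ hA F
    fun v _ hv ↦ Order.lt_succ_iff.mpr (hF2 v hv)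
  exact ⟨w, hw, fun v hvw hv ↦ hfree.not_subset hvw hv (by omega)⟩
end
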